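/- Let ξ: ℝ^d → ℝ^d be Lipschitz and bounded, and u: ℝ^d → ℝ bounded measurable. Then the commutator of multiplication by ξ with convolution by ∇G_h satisfies the uniform estimate ‖ξ·(∇G_h∗u) − ∇G_h∗(ξ u)‖_∞ ≤ C ‖∇ξ‖_∞ ‖u‖_∞, with C depending only on the dimension d (in particular independent of h). -/

import Mathlib

open Real MeasureTheory
open scoped RealInnerProductSpace

/-- The centered Gaussian kernel of variance `h` on `ℝ^d`. -/
noncomputable def gauss (d : ℕ) (h : ℝ) (z : EuclideanSpace ℝ (Fin d)) : ℝ :=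
  (2 * π * h) ^ (-(d : ℝ) / 2) * Real.exp (-‖z‖ ^ 2 / (2 * h))

/-- The gradient `∇G_h(z) = -(G_h(z)/h) z` of the Gaussian kernel. -/
noncomputable def gradGauss (d : ℕ) (h : ℝ) (z : EuclideanSpace ℝ (Fin d)) :
    EuclideanSpace ℝ (Fin d) :=
  (-(gauss d h z) / h) • z

/-- Uniform-in-`h` commutator estimate: for Lipschitz bounded
`ξ : ℝ^d → ℝ^d` and bounded measurable `u`,
`‖[ξ·, ∇G_h∗]u‖_∞ = ‖ξ·(∇G_h∗u) − ∇G_h∗(ξu)‖_∞ ≤ C‖∇ξ‖_∞‖u‖_∞`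
with `C = C(d)` independent of `h`. -/
theorem stmt8 (d : ℕ) :
    ∃ C : ℝ, 0 < C ∧ ∀ (h : ℝ), 0 < h →
      ∀ (ξ : EuclideanSpace ℝ (Fin d) → EuclideanSpace ℝ (Fin d)) (K : NNReal),
        LipschitzWith K ξ → ∀ B : ℝ, (∀ x, ‖ξ x‖ ≤ B) →
      ∀ (u : EuclideanSpace ℝ (Fin d) → ℝ), Measurable u →
      ∀ M : ℝ, 0 ≤ M → (∀ x, |u x| ≤ M) →
      ∀ x, |∫ z, ⟪ξ x - ξ (x - z), gradGauss d h z⟫ * u (x - z)| ≤ C * K * M := by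
  refine ⟨4 * 2 ^ ((d : ℝ) / 2), by positivity, ?_⟩
  intro h hh ξ K hξ B _ u _ M hM hu x
  have hb : 0 < 1 / (4 * h) := by positivity
  have hI := GaussianFourier.integral_rexp_neg_mul_sq_norm
    (V := EuclideanSpace ℝ (Fin d)) hb
  have hint : Integrable (fun z : EuclideanSpace ℝ (Fin d) =>
      rexp (-(1 / (4 * h)) * ‖z‖ ^ 2)) := by
    apply Integrable.of_integral_ne_zero
    rw [hI]
    positivity
  set c : ℝ := (2 * π * h) ^ (-(d : ℝ) / 2) with hc
  have hc0 : 0 < c := by positivity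
  have key : ∀ z : EuclideanSpace ℝ (Fin d),
      ‖⟪ξ x - ξ (x - z), gradGauss d h z⟫ * u (x - z)‖
        ≤ (K * M * c * 4) * rexp (-(1 / (4 * h)) * ‖z‖ ^ 2) := by
    intro z
    have h1 : ‖ξ x - ξ (x - z)‖ ≤ K * ‖z‖ := by
      have := hξ.dist_le_mul x (x - z)
      simpa [dist_eq_norm] using this
    have h2 : ‖gradGauss d h z‖ = c * rexp (-‖z‖ ^ 2 / (2 * h)) / h * ‖z‖ := by
      have h0 : 0 ≤ c * rexp (-‖z‖ ^ 2 / (2 * h)) / h := by positivity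
      rw [gradGauss, norm_smul, gauss, ← hc, neg_div, norm_neg, Real.norm_of_nonneg h0]
    set s : ℝ := ‖z‖ ^ 2 / (4 * h) with hs
    have h3 : s * rexp (-s) ≤ 1 := by
      have := Real.add_one_le_exp s
      rw [Real.exp_neg, ← div_eq_mul_inv, div_le_one (Real.exp_pos s)]
      linarith
    have e1 : -‖z‖ ^ 2 / (2 * h) = -s + -s := by rw [hs]; field_simp; ring
    have e2 : -(1 / (4 * h)) * ‖z‖ ^ 2 = -s := by rw [hs]; field_simp
    have e3 : ‖z‖ * ‖z‖ / h = 4 * s := by rw [hs]; field_simp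
    rw [e2, norm_mul, Real.norm_eq_abs (u _)]
    calc ‖⟪ξ x - ξ (x - z), gradGauss d h z⟫‖ * |u (x - z)|
        ≤ ((K * ‖z‖) * ‖gradGauss d h z‖) * M := by
          have := norm_inner_le_norm (𝕜 := ℝ) (ξ x - ξ (x - z)) (gradGauss d h z)
          have h5 := mul_le_mul_of_nonneg_right h1 (norm_nonneg (gradGauss d h z))
          exact mul_le_mul (this.trans h5) (hu _) (abs_nonneg _) (by positivity)
      _ = K * M * c * (‖z‖ * ‖z‖ / h) * (rexp (-s) * rexp (-s)) := by
          rw [h2, e1, Real.exp_add]; ring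
      _ = (K * M * c * 4 * rexp (-s)) * (s * rexp (-s)) := by rw [e3]; ring
      _ ≤ (K * M * c * 4 * rexp (-s)) * 1 :=
          mul_le_mul_of_nonneg_left h3 (by positivity)
      _ = _ := by ring
  have hfin := norm_integral_le_of_norm_le (hint.const_mul (K * M * c * 4))
    (Filter.Eventually.of_forall key)
  rw [integral_const_mul, hI, Real.norm_eq_abs] at hfin
  refine hfin.trans (le_of_eq ?_)
  have e4 : π / (1 / (4 * h)) = 2 * (2 * π * h) := by field_simp; ring
  have e5 : c * (2 * π * h) ^ ((d : ℝ) / 2) = 1 := by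
    rw [hc, neg_div, ← Real.rpow_add (by positivity)]; simp
  rw [finrank_euclideanSpace_fin, e4, Real.mul_rpow (by norm_num) (by positivity)]
  calc _ = 4 * 2 ^ ((d : ℝ) / 2) * K * M * (c * (2 * π * h) ^ ((d : ℝ) / 2)) := by ring
    _ = _ := by rw [e5]; ring
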